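/- If n ≥ 2 is a power of 2, then the number of alternating (up–down) n-cycles, i.e., n-cycles with descent set {2, 4, …} ∩ [n-1], equals (E_n - 1)/n, where E_n is the number of alternating permutations of [n]. -/

import Mathlib

/-!
The proof is a counting argument in the style of Gessel and Reutenauer. A set `J` of positions cuts
`[n]` into blocks; let `f` be the monotone colouring of `Fin n` by blocks (`blockIdx`). Then
`descSet π ⊆ J` holds exactly when `π` is increasing on every block (`descSet_subset_iff`), and by
stable sorting such permutations correspond to the words that rearrange `f` (`card_blockInc`).

Let `c` be the rotation of `Fin n`. Every `n`-cycle `π` has exactly `n` expressions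
`π = φ * c * φ⁻¹` (`card_conj`). Sending `φ` to the word `f ∘ φ`, which records the blocks visited
along the cycle, is a bijection from the `φ` with `φ * c * φ⁻¹` block-increasing onto the
rearrangements of `f` all of whose rotations are distinct; the inverse ranks the positions of the
word by the lexicographic order of the rotations starting there (`card_primitive`).

When `n = 2 * 2 ^ a`, a word has two equal rotations iff it is invariant under rotation by `n / 2`
(`not_injective_cycKey_iff`). If moreover `J = 2L`, halving such a word gives a rearrangement of the
block colouring of `Fin (n / 2)` attached to `L` (`card_periodic`). Hence
`n * alphaC n (2L) + alphaP (n / 2) L = alphaP n (2L)` for every `L` (`alpha_relation`), and strong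
induction on `L` turns this into the same relation for `betaC` and `betaP` (`beta_relation`). For
`L = {1, …, n / 2 - 1}` the set `2L` is the alternating descent set, while `betaP (n / 2) L = 1`, as
only the order-reversing permutation has every possible descent (`betaP_full`).
-/

open Finset

/-- The value `π(i)` of a permutation of `[n]`, in 1-based position notation. -/
def permVal {n : ℕ} (π : Equiv.Perm (Fin n)) (i : ℕ) : ℕ :=
  if h : i - 1 < n then ((π ⟨i - 1, h⟩ : Fin n) : ℕ) else 0

/-- The descent set `D(π) = {i ∈ [n-1] : π(i) > π(i+1)}` (1-based). -/
def descSet {n : ℕ} (π : Equiv.Perm (Fin n)) : Finset ℕ :=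
  (Finset.Ioo 0 n).filter fun i => permVal π (i + 1) < permVal π i

/-- `π` is an `n`-cycle: a permutation of `[n]` consisting of a single cycle of length `n`. -/
def IsFullCycle {n : ℕ} (π : Equiv.Perm (Fin n)) : Prop :=
  ∀ x y : Fin n, ∃ k : ℕ, (π ^ k) x = y

/-- `α_n(I)`: number of permutations of `[n]` with descent set contained in `I`. -/
noncomputable def alphaP (n : ℕ) (I : Finset ℕ) : ℕ :=
  Nat.card {π : Equiv.Perm (Fin n) // descSet π ⊆ I}

/-- `α^cyc_n(I)`: number of `n`-cycles with descent set contained in `I`. -/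
noncomputable def alphaC (n : ℕ) (I : Finset ℕ) : ℕ :=
  Nat.card {π : Equiv.Perm (Fin n) // IsFullCycle π ∧ descSet π ⊆ I}

/-- `β_n(I)`: number of permutations of `[n]` with descent set exactly `I`. -/
noncomputable def betaP (n : ℕ) (I : Finset ℕ) : ℕ :=
  Nat.card {π : Equiv.Perm (Fin n) // descSet π = I}

/-- `β^cyc_n(I)`: number of `n`-cycles with descent set exactly `I`. -/
noncomputable def betaC (n : ℕ) (I : Finset ℕ) : ℕ :=
  Nat.card {π : Equiv.Perm (Fin n) // IsFullCycle π ∧ descSet π = I}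

/-- `I/d = {i/d : i ∈ I, d ∣ i}`. -/
def divSet (I : Finset ℕ) (d : ℕ) : Finset ℕ :=
  (I.filter fun i => d ∣ i).image (· / d)

/-! ### Descent sets and block-increasing permutations -/

section Blocks

variable {n : ℕ}

/-- `π` is increasing on each level set of the colouring `f` of the positions. -/
def BlockInc (f : Fin n → ℕ) (π : Equiv.Perm (Fin n)) : Prop :=
  ∀ i j, i < j → f i = f j → π i < π j

/-- The word `w` has the same letters with the same multiplicities as `f`. -/
def Rearr (f w : Fin n → ℕ) : Prop := ∃ σ : Equiv.Perm (Fin n), w = f ∘ σ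

/-- The infinite word read from `w` along the `c`-orbit starting at `t`, ordered lexicographically.
It repeats with the orbit, so comparing these infinite words amounts to comparing rotations of
`w`. -/
noncomputable def cycKey (c : Equiv.Perm (Fin n)) (w : Fin n → ℕ) (t : Fin n) :
    Lex (ℕ → ℕ) :=
  toLex fun i => w ((c ^ i) t)

/-- The index of the block of `i` when `[n]` is cut after each position in `J`. As `i` counts from
`0` and the elements of `J` count from `1`, the cut `p` separates `p - 1` from `p`, so the cuts
before `i` are the `p ≤ i`. -/
def blockIdx (n : ℕ) (J : Finset ℕ) (i : Fin n) : ℕ := (J.filter (· ≤ (i : ℕ))).card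

lemma blockIdx_monotone (J : Finset ℕ) : Monotone (blockIdx n J) := by
  intro i j hij
  apply Finset.card_le_card
  intro p
  simp only [Finset.mem_filter]
  rintro ⟨hp, hpi⟩
  exact ⟨hp, hpi.trans hij⟩

/-- Two positions lie in the same block iff no cut falls between them. -/
lemma blockIdx_eq_iff (J : Finset ℕ) {i j : Fin n} (hij : i ≤ j) :
    blockIdx n J i = blockIdx n J j ↔ ∀ p ∈ J, (i : ℕ) < p → (j : ℕ) < p := by
  have hij' : (i : ℕ) ≤ j := hij
  have hsub : J.filter (· ≤ (i : ℕ)) ⊆ J.filter (· ≤ (j : ℕ)) := by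
    intro p
    simp only [Finset.mem_filter]
    rintro ⟨hp, hpi⟩
    exact ⟨hp, by omega⟩
  constructor
  · intro h p hp hip
    have := Finset.eq_of_subset_of_card_le hsub h.ge
    by_contra hjp
    have h2 : p ∈ J.filter (· ≤ (j : ℕ)) := by simp [hp]; omega
    rw [← this] at h2
    simp at h2
    omega
  · intro h
    unfold blockIdx
    congr 1
    ext p
    simp only [Finset.mem_filter, and_congr_right_iff]
    intro hp
    have := h p hp
    omega

/-- Descents in terms of `0`-based positions. -/
lemma mem_descSet {π : Equiv.Perm (Fin n)} {p : ℕ} :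
    p ∈ descSet π ↔ ∃ (h0 : 0 < p) (h : p < n),
      π ⟨p, h⟩ < π ⟨p - 1, by omega⟩ := by
  unfold descSet permVal
  simp only [Finset.mem_filter, Finset.mem_Ioo, Nat.add_sub_cancel]
  constructor
  · rintro ⟨⟨h0, h⟩, hlt⟩
    rw [dif_pos h, dif_pos (by omega)] at hlt
    exact ⟨h0, h, hlt⟩
  · rintro ⟨h0, h, hlt⟩
    refine ⟨⟨h0, h⟩, ?_⟩
    rw [dif_pos h, dif_pos (by omega)]
    exact hlt

lemma descSet_subset_iff (J : Finset ℕ) (π : Equiv.Perm (Fin n)) :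
    descSet π ⊆ J ↔ BlockInc (blockIdx n J) π := by
  constructor
  · intro h i j hij hf
    rw [blockIdx_eq_iff J hij.le] at hf
    have key : ∀ d : ℕ, ∀ hd : (i : ℕ) + d + 1 < n, (i : ℕ) + d + 1 ≤ j →
        π i < π ⟨i + d + 1, hd⟩ := by
      have step : ∀ p : ℕ, ∀ hp : p + 1 < n, (i : ℕ) ≤ p → p + 1 ≤ (j : ℕ) →
          π ⟨p, by omega⟩ < π ⟨p + 1, hp⟩ := by
        intro p hp hip hpj
        by_contra hlt
        have hne : π ⟨p, by omega⟩ ≠ π ⟨p + 1, hp⟩ := by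
          intro he
          have := π.injective he
          simp at this
        have hmem : p + 1 ∈ descSet π :=
          mem_descSet.2 ⟨by omega, hp, lt_of_le_of_ne (not_lt.1 hlt) hne.symm⟩
        have := hf _ (h hmem) (by omega)
        omega
      intro d
      induction d with
      | zero => intro hd hle; exact step i hd le_rfl hle
      | succ d ih =>
        intro hd hle
        exact (ih (by omega) (by omega)).trans (step _ hd (by omega) hle)
    have hij' : (i : ℕ) < j := hij
    have := key (j - i - 1) (by omega) (by omega)
    convert this using 3
    omega
  · intro h p hp
    obtain ⟨h0, hpn, hlt⟩ := mem_descSet.1 hp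
    by_contra hpJ
    have hlt' : (⟨p - 1, by omega⟩ : Fin n) < ⟨p, hpn⟩ := by
      simp only [Fin.mk_lt_mk]; omega
    refine lt_asymm hlt (h _ _ hlt' ((blockIdx_eq_iff J hlt'.le).2 ?_))
    intro q hq hpq
    have : q ≠ p := by rintro rfl; exact hpJ hq
    simp only at hpq ⊢
    omega

/-! ### Words as sorted rearrangements -/

lemma comp_eq_of_monotone {f w : Fin n → ℕ} (hf : Monotone f) (hw : Rearr f w)
    {σ : Equiv.Perm (Fin n)} (h : Monotone (w ∘ σ)) : w ∘ σ = f := by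
  obtain ⟨τ, rfl⟩ := hw
  exact Tuple.unique_monotone (f := f) (σ := σ.trans τ) (τ := 1) h hf

/-- A rearrangement `w` of `f` is `f ∘ π⁻¹` for exactly one block-increasing `π`, namely the stable
sorting permutation of `w`. -/
lemma card_blockInc {f : Fin n → ℕ} (hf : Monotone f) :
    Nat.card {π : Equiv.Perm (Fin n) // BlockInc f π} = Nat.card {w : Fin n → ℕ // Rearr f w} := by
  refine Nat.card_eq_of_bijective
    (fun π => (⟨f ∘ ⇑(π.1⁻¹), π.1⁻¹, rfl⟩ : {w : Fin n → ℕ // Rearr f w})) ⟨?_, ?_⟩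
  · have key : ∀ π : Equiv.Perm (Fin n), BlockInc f π → π = Tuple.sort (f ∘ ⇑(π⁻¹)) := by
      intro π hπ
      refine Tuple.eq_sort_iff.2 ⟨?_, ?_⟩
      · intro i j hij
        simpa using hf hij
      · intro i j hij h
        exact hπ i j hij (by simpa using h)
    rintro ⟨π, hπ⟩ ⟨ρ, hρ⟩ h
    have h' := congrArg Subtype.val h
    simp only at h'
    rw [Subtype.mk.injEq, key π hπ, key ρ hρ, h']
  · rintro ⟨w, hw⟩
    have hs := comp_eq_of_monotone hf hw (Tuple.monotone_sort w)
    refine ⟨⟨Tuple.sort w, ?_⟩, ?_⟩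
    · intro i j hij h
      rw [← hs] at h
      exact (Tuple.eq_sort_iff.1 rfl).2 i j hij h
    · apply Subtype.ext
      simp only
      rw [← hs]
      ext i
      simp

/-! ### Cycles and words with distinct rotations -/

lemma cycKey_lt_iff {c : Equiv.Perm (Fin n)} {w : Fin n → ℕ} {s t : Fin n} :
    cycKey c w s < cycKey c w t ↔
      ∃ i, (∀ j < i, w ((c ^ j) s) = w ((c ^ j) t)) ∧ w ((c ^ i) s) < w ((c ^ i) t) :=
  Iff.rfl

lemma cycKey_eq_iff {c : Equiv.Perm (Fin n)} {w : Fin n → ℕ} {s t : Fin n} :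
    cycKey c w s = cycKey c w t ↔ ∀ i, w ((c ^ i) s) = w ((c ^ i) t) :=
  ⟨fun h i => congrFun h i, fun h => funext h⟩

/-- For block-increasing `π`, two points are ordered like their itineraries through the blocks: the
order at the first difference pulls back along `π`, since inside a block `π` preserves order. -/
lemma BlockInc.lt_of_pow {f : Fin n → ℕ} (hf : Monotone f) {π : Equiv.Perm (Fin n)}
    (hπ : BlockInc f π) (i : ℕ) : ∀ x y : Fin n,
    (∀ j < i, f ((π ^ j) x) = f ((π ^ j) y)) → f ((π ^ i) x) < f ((π ^ i) y) → x < y := by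
  induction i with
  | zero => intro x y _ h; exact hf.reflect_lt h
  | succ i ih =>
    intro x y h1 h2
    have h3 : π x < π y := by
      refine ih _ _ (fun j hj => ?_) (by simpa [pow_succ] using h2)
      simpa [pow_succ] using h1 (j + 1) (by omega)
    by_contra h4
    rcases (not_lt.1 h4).lt_or_eq with h5 | h5
    · exact lt_asymm h3 (hπ y x h5 (h1 0 (by omega)).symm)
    · subst h5; exact lt_irrefl _ h3

/-- Distinct points of a block-increasing full cycle have distinct itineraries. If `x < y = π ^ k x`
had the same itinerary, then `x < π ^ k x < π ^ (2 * k) x < ⋯` would increase forever. -/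
lemma BlockInc.eq_of_pow {f : Fin n → ℕ} {π : Equiv.Perm (Fin n)}
    (hπ : BlockInc f π) (hc : IsFullCycle π) {x y : Fin n}
    (h : ∀ i, f ((π ^ i) x) = f ((π ^ i) y)) : x = y := by
  have key : ∀ x y : Fin n, (∀ i, f ((π ^ i) x) = f ((π ^ i) y)) → ¬ x < y := by
    intro x y h hxy
    have h1 : ∀ i, (π ^ i) x < (π ^ i) y := by
      intro i
      induction i with
      | zero => exact hxy
      | succ i ih =>
        simpa [pow_succ'] using hπ _ _ ih (h i)
    obtain ⟨k, rfl⟩ := hc x y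
    have h2 : StrictMono fun j : ℕ => (π ^ (k * j)) x := by
      refine strictMono_nat_of_lt_succ fun j => ?_
      have := h1 (k * j)
      rwa [← Equiv.Perm.mul_apply, ← pow_add] at this
    exact not_injective_infinite_finite _ h2.injective
  rcases lt_trichotomy x y with h1 | h1 | h1
  · exact (key _ _ h h1).elim
  · exact h1
  · exact (key _ _ (fun i => (h i).symm) h1).elim

lemma IsFullCycle.conj {c : Equiv.Perm (Fin n)} (hc : IsFullCycle c) (φ : Equiv.Perm (Fin n)) :
    IsFullCycle (φ * c * φ⁻¹) := by
  intro x y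
  obtain ⟨k, hk⟩ := hc (φ⁻¹ x) (φ⁻¹ y)
  refine ⟨k, ?_⟩
  rw [conj_pow, Equiv.Perm.mul_apply, Equiv.Perm.mul_apply, hk]
  simp

lemma conj_pow_apply (c φ : Equiv.Perm (Fin n)) (i : ℕ) (t : Fin n) :
    ((φ * c * φ⁻¹) ^ i) (φ t) = φ ((c ^ i) t) := by
  rw [conj_pow]; simp

/-- Conjugators `φ` making `φ * c * φ⁻¹` block-increasing correspond, via `φ ↦ f ∘ φ`, to the
rearrangements of `f` with pairwise distinct rotations. -/
lemma card_primitive {f : Fin n → ℕ} (hf : Monotone f) {c : Equiv.Perm (Fin n)}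
    (hc : IsFullCycle c) :
    Nat.card {φ : Equiv.Perm (Fin n) // BlockInc f (φ * c * φ⁻¹)} =
      Nat.card {w : Fin n → ℕ // Rearr f w ∧ Function.Injective (cycKey c w)} := by
  have hinj : ∀ φ : Equiv.Perm (Fin n), BlockInc f (φ * c * φ⁻¹) →
      Function.Injective (cycKey c (f ∘ φ)) := by
    intro φ hφ s t hst
    rw [cycKey_eq_iff] at hst
    refine φ.injective (hφ.eq_of_pow (hc.conj φ) fun i => ?_)
    simpa only [conj_pow_apply, Function.comp_apply] using hst i
  have hlt : ∀ φ : Equiv.Perm (Fin n), BlockInc f (φ * c * φ⁻¹) →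
      ∀ s t, cycKey c (f ∘ φ) s < cycKey c (f ∘ φ) t → φ s < φ t := by
    intro φ hφ s t hst
    obtain ⟨i, h1, h2⟩ := cycKey_lt_iff.1 hst
    refine hφ.lt_of_pow hf i _ _ (fun j hj => ?_) ?_
    · simpa only [conj_pow_apply, Function.comp_apply] using h1 j hj
    · simpa only [conj_pow_apply, Function.comp_apply] using h2
  refine Nat.card_eq_of_bijective
    (fun φ => (⟨f ∘ ⇑φ.1, ⟨φ.1, rfl⟩, hinj φ.1 φ.2⟩ :
      {w : Fin n → ℕ // Rearr f w ∧ Function.Injective (cycKey c w)})) ⟨?_, ?_⟩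
  · have key : ∀ φ : Equiv.Perm (Fin n), BlockInc f (φ * c * φ⁻¹) →
        φ⁻¹ = Tuple.sort (cycKey c (f ∘ φ)) := by
      intro φ hφ
      refine Tuple.eq_sort_iff.2 ⟨?_, ?_⟩
      · intro i j hij
        by_contra h
        have := hlt φ hφ _ _ (not_le.1 h)
        simp only [Equiv.Perm.inv_def, Equiv.apply_symm_apply] at this
        exact absurd hij (not_le.2 this)
      · intro i j hij h
        exact absurd (φ⁻¹.injective (hinj φ hφ h)) hij.ne
    rintro ⟨φ, hφ⟩ ⟨ρ, hρ⟩ h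
    have h' := congrArg Subtype.val h
    simp only at h'
    rw [Subtype.mk.injEq]
    apply inv_injective
    rw [key φ hφ, key ρ hρ, h']
  · rintro ⟨w, hw, hwi⟩
    set σ := Tuple.sort (cycKey c w) with hσ
    have hmono : Monotone (cycKey c w ∘ σ) := Tuple.monotone_sort _
    have hs : w ∘ σ = f := by
      refine comp_eq_of_monotone hf hw fun i j hij => ?_
      exact Pi.apply_le_of_toLex (i := 0) (hmono hij) (fun k hk => absurd hk (by simp))
    -- `σ⁻¹ t` is the rank of the rotation starting at `t`.
    have hrank : ∀ s t, cycKey c w s < cycKey c w t → σ⁻¹ s < σ⁻¹ t := by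
      intro s t hst
      by_contra h
      have := hmono (not_lt.1 h)
      simp only [Function.comp, Equiv.Perm.inv_def, Equiv.apply_symm_apply] at this
      exact absurd hst (not_lt.2 this)
    refine ⟨⟨σ⁻¹, ?_⟩, ?_⟩
    · intro i j hij h
      simp only [inv_inv, Equiv.Perm.mul_apply]
      apply hrank
      rw [← hs] at h
      have h1 : cycKey c w (σ i) < cycKey c w (σ j) :=
        lt_of_le_of_ne (hmono hij.le) fun he => hij.ne (σ.injective (hwi he))
      -- The first letters agree, so dropping them does not change the comparison.
      obtain ⟨k, h2, h3⟩ := cycKey_lt_iff.1 h1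
      cases k with
      | zero => exact absurd h3 (by simpa using h.not_lt)
      | succ k =>
        refine cycKey_lt_iff.2 ⟨k, fun j hj => ?_, by simpa [pow_succ] using h3⟩
        simpa [pow_succ] using h2 (j + 1) (by omega)
    · apply Subtype.ext
      simp only
      rw [← hs]
      ext i
      simp

lemma IsFullCycle.isCycle (hn : 2 ≤ n) {π : Equiv.Perm (Fin n)} (h : IsFullCycle π) :
    π.IsCycle ∧ π.support = univ := by
  have hne : ∀ x, π x ≠ x := by
    intro x hx
    have h1 : ∀ k : ℕ, (π ^ k) x = x := fun k => by
      induction k with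
      | zero => rfl
      | succ k ih => rw [pow_succ, Equiv.Perm.mul_apply, hx, ih]
    have : Nontrivial (Fin n) := Fin.nontrivial_iff_two_le.2 hn
    obtain ⟨y, hy⟩ := exists_ne x
    obtain ⟨k, hk⟩ := h x y
    exact hy (hk.symm.trans (h1 k))
  refine ⟨⟨⟨0, by omega⟩, hne _, fun y _ => ?_⟩, ?_⟩
  · obtain ⟨k, hk⟩ := h ⟨0, by omega⟩ y
    exact ⟨k, by simpa using hk⟩
  · ext x; simp [hne x]

/-- Each full cycle `π` is `φ * c * φ⁻¹` for exactly `n` permutations `φ`, one for each value of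
`φ 0`. -/
lemma card_conj (hn : 2 ≤ n) {c : Equiv.Perm (Fin n)} (hc : IsFullCycle c)
    (P : Equiv.Perm (Fin n) → Prop) :
    Nat.card {φ : Equiv.Perm (Fin n) // P (φ * c * φ⁻¹)} =
      n * Nat.card {π : Equiv.Perm (Fin n) // IsFullCycle π ∧ P π} := by
  have h0 : 0 < n := by omega
  have : Nat.card {φ : Equiv.Perm (Fin n) // P (φ * c * φ⁻¹)} =
      Nat.card (Fin n × {π : Equiv.Perm (Fin n) // IsFullCycle π ∧ P π}) := by
    refine Nat.card_eq_of_bijective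
      (fun φ => ((φ.1 ⟨0, h0⟩, ⟨φ.1 * c * φ.1⁻¹, hc.conj _, φ.2⟩) :
        Fin n × {π : Equiv.Perm (Fin n) // IsFullCycle π ∧ P π})) ⟨?_, ?_⟩
    · rintro ⟨φ, hφ⟩ ⟨ρ, hρ⟩ h
      simp only [Prod.mk.injEq, Subtype.mk.injEq] at h ⊢
      obtain ⟨h1, h2⟩ := h
      ext t
      obtain ⟨k, rfl⟩ := hc ⟨0, h0⟩ t
      rw [← conj_pow_apply, ← conj_pow_apply, h1, h2]
    · rintro ⟨x, π, hπ, hP⟩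
      obtain ⟨hc1, hc2⟩ := hc.isCycle hn
      obtain ⟨hp1, hp2⟩ := hπ.isCycle hn
      obtain ⟨ψ, hψ⟩ := isConj_iff.1 (hc1.isConj hp1 (by rw [hc2, hp2]))
      obtain ⟨k, hk⟩ := hπ (ψ ⟨0, h0⟩) x
      -- Powers of `π` commute with `π`, so they may be used to adjust the value at `0`.
      have h1 : (π ^ k * ψ) * c * (π ^ k * ψ)⁻¹ = π := by
        have : (π ^ k * ψ) * c * (π ^ k * ψ)⁻¹ = π ^ k * (ψ * c * ψ⁻¹) * (π ^ k)⁻¹ := by group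
        rw [this, hψ, ← pow_succ, pow_succ', mul_inv_cancel_right]
      refine ⟨⟨π ^ k * ψ, by rwa [h1]⟩, ?_⟩
      simp only [Prod.mk.injEq, Subtype.mk.injEq]
      exact ⟨hk, h1⟩
  rw [this, Nat.card_prod, Nat.card_eq_fintype_card, Fintype.card_fin]

end Blocks

/-! ### Periodic words of length a power of two -/

section Rotation

variable {n : ℕ} [NeZero n]

lemma pow_addRight_val (k : ℕ) (t : Fin n) :
    (((Equiv.addRight (1 : Fin n)) ^ k) t : ℕ) = (t + k) % n := by
  induction k with
  | zero => simp [Nat.mod_eq_of_lt t.2]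
  | succ k ih =>
    rw [pow_succ', Equiv.Perm.mul_apply, Equiv.coe_addRight, Fin.val_add, ih, Fin.val_one']
    rw [← Nat.add_mod, ← add_assoc]

lemma isFullCycle_addRight : IsFullCycle (Equiv.addRight (1 : Fin n)) := by
  intro x y
  refine ⟨y + (n - x), Fin.ext ?_⟩
  rw [pow_addRight_val]
  have : (x : ℕ) + (y + (n - x)) = y + n := by omega
  rw [this, Nat.add_mod_right, Nat.mod_eq_of_lt y.2]

end Rotation

/-- In length `2 ^ (a + 1)`, every nontrivial period has `2 ^ a` among its multiples modulo the
length, because the periods form a subgroup of `ℤ` containing `2 ^ (a + 1)`. -/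
lemma not_injective_cycKey_iff {a : ℕ} (w : Fin (2 * 2 ^ a) → ℕ) :
    ¬ Function.Injective (cycKey (Equiv.addRight (1 : Fin (2 * 2 ^ a))) w) ↔
      ∀ t, w (((Equiv.addRight (1 : Fin (2 * 2 ^ a))) ^ (2 ^ a)) t) = w t := by
  set c := Equiv.addRight (1 : Fin (2 * 2 ^ a)) with hc
  have hm : 0 < 2 ^ a := by positivity
  have hcn : c ^ (2 * 2 ^ a) = 1 := by
    ext t
    rw [pow_addRight_val]
    simp [Nat.mod_eq_of_lt t.2]
  constructor
  · intro h
    simp only [Function.Injective, not_forall] at h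
    obtain ⟨s, t, hst, hne⟩ := h
    rw [cycKey_eq_iff] at hst
    obtain ⟨k, rfl⟩ := isFullCycle_addRight s t
    -- The periods of `w`.
    let H : AddSubgroup ℤ :=
      { carrier := {z | ∀ u, w ((c ^ z) u) = w u}
        add_mem' := by
          intro x y hx hy u
          rw [zpow_add, Equiv.Perm.mul_apply, hx, hy]
        zero_mem' := by intro u; simp
        neg_mem' := by
          intro x hx u
          have := hx ((c ^ (-x)) u)
          rw [← Equiv.Perm.mul_apply, ← zpow_add, add_neg_cancel, zpow_zero] at this
          exact this.symm }
    have hkH : (k : ℤ) ∈ H := by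
      intro u
      obtain ⟨i, rfl⟩ := isFullCycle_addRight s u
      rw [zpow_natCast, ← Equiv.Perm.mul_apply, ← hc, ← pow_add, add_comm, pow_add,
        Equiv.Perm.mul_apply]
      exact (hst i).symm
    have hnH : ((2 * 2 ^ a : ℕ) : ℤ) ∈ H := by
      intro u
      rw [zpow_natCast, hcn]; rfl
    have hgH : ((Nat.gcd k (2 * 2 ^ a) : ℕ) : ℤ) ∈ H := by
      rw [Nat.gcd_eq_gcd_ab]
      refine H.add_mem ?_ ?_
      · rw [mul_comm, ← smul_eq_mul]; exact H.zsmul_mem hkH _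
      · rw [mul_comm, ← smul_eq_mul]; exact H.zsmul_mem hnH _
    have hdvd : Nat.gcd k (2 * 2 ^ a) ∣ 2 ^ a := by
      have h1 : Nat.gcd k (2 * 2 ^ a) ∣ 2 ^ (a + 1) := by
        rw [pow_succ']; exact Nat.gcd_dvd_right _ _
      obtain ⟨b, hb, hb2⟩ := (Nat.dvd_prime_pow Nat.prime_two).1 h1
      rw [hb2]
      apply pow_dvd_pow
      by_contra hba
      have : b = a + 1 := by omega
      rw [this] at hb2
      have h3 : 2 * 2 ^ a ∣ k := by
        rw [← pow_succ', ← hb2]; exact Nat.gcd_dvd_left _ _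
      obtain ⟨q, rfl⟩ := h3
      apply hne
      rw [← hc, pow_mul, hcn, one_pow]; rfl
    obtain ⟨q, hq⟩ := hdvd
    have hmH : ((2 ^ a : ℕ) : ℤ) ∈ H := by
      rw [hq, Nat.cast_mul, mul_comm, ← smul_eq_mul]
      exact H.zsmul_mem hgH _
    intro t
    have := hmH t
    rwa [zpow_natCast] at this
  · intro h hinj
    have h0 : (c ^ (2 ^ a)) 0 = 0 := by
      apply hinj
      rw [cycKey_eq_iff]
      intro i
      rw [← Equiv.Perm.mul_apply, ← pow_add, add_comm, pow_add, Equiv.Perm.mul_apply, h]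
    have := congrArg Fin.val h0
    rw [pow_addRight_val] at this
    simp at this
    rw [Nat.mod_eq_of_lt (by omega)] at this
    omega

/-- `t ↦ (t / 2, t % 2)`. -/
def divTwo (m : ℕ) : Fin (2 * m) ≃ Fin m × Fin 2 :=
  (finCongr (mul_comm 2 m)).trans finProdFinEquiv.symm

/-- `t ↦ (t % m, t / m)`. -/
def residue (m : ℕ) : Fin (2 * m) ≃ Fin m × Fin 2 :=
  finProdFinEquiv.symm.trans (Equiv.prodComm _ _)

lemma divTwo_val {m : ℕ} (t : Fin (2 * m)) : ((divTwo m t).1 : ℕ) = t / 2 := rfl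

lemma residue_val {m : ℕ} (t : Fin (2 * m)) : ((residue m t).1 : ℕ) = t % m := rfl

/-- If `f` is `f'` with each letter doubled, then `vv` is a rearrangement of `f` iff `v` is one of
`f'`. -/
lemma rearr_residue_iff {m : ℕ} {f : Fin (2 * m) → ℕ} (hf : Monotone f) {f' : Fin m → ℕ}
    (hff : f = fun t => f' (divTwo m t).1) (v : Fin m → ℕ) :
    Rearr f (fun t => v (residue m t).1) ↔ Rearr f' v := by
  constructor
  · intro hw
    -- Sorting `v` and doubling its letters sorts `vv`, hence gives `f`.
    set s := Tuple.sort v with hs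
    have h1 := comp_eq_of_monotone hf hw
      (σ := (divTwo m).trans ((s.prodCongr (Equiv.refl _)).trans (residue m).symm)) (by
        intro i j hij
        simp only [Function.comp, Equiv.trans_apply, Equiv.apply_symm_apply]
        apply Tuple.monotone_sort v
        change (i : ℕ) / 2 ≤ (j : ℕ) / 2
        exact Nat.div_le_div_right hij)
    refine ⟨s⁻¹, ?_⟩
    have h2 : v ∘ s = f' := by
      funext i
      have := congrFun (h1.trans hff) ((divTwo m).symm (i, 0))
      simpa using this
    rw [← h2]
    ext; simp
  · rintro ⟨σ, rfl⟩
    refine ⟨(residue m).trans ((σ.prodCongr (Equiv.refl _)).trans (divTwo m).symm), ?_⟩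
    subst hff
    funext t
    simp

lemma blockIdx_double (m : ℕ) (L : Finset ℕ) :
    blockIdx (2 * m) (L.image (2 * ·)) = fun t => blockIdx m L (divTwo m t).1 := by
  funext t
  unfold blockIdx
  rw [divTwo_val, Finset.filter_image, Finset.card_image_of_injective _
    (mul_right_injective₀ two_ne_zero)]
  congr 1
  ext p
  simp only [Finset.mem_filter, and_congr_right_iff]
  intro _
  omega

/-- Rearrangements of a doubled colouring `f` with two equal rotations are the words `vv` with `v` a
rearrangement of the halved colouring `f'`. -/
lemma card_periodic {a : ℕ} {f : Fin (2 * 2 ^ a) → ℕ} (hf : Monotone f) {f' : Fin (2 ^ a) → ℕ}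
    (hff : f = fun t => f' (divTwo (2 ^ a) t).1) :
    Nat.card {w : Fin (2 * 2 ^ a) → ℕ // Rearr f w ∧
      ¬ Function.Injective (cycKey (Equiv.addRight (1 : Fin (2 * 2 ^ a))) w)} =
    Nat.card {v : Fin (2 ^ a) → ℕ // Rearr f' v} := by
  have hm : 0 < 2 ^ a := by positivity
  symm
  refine Nat.card_eq_of_bijective
    (fun v => (⟨fun t => v.1 (residue _ t).1, (rearr_residue_iff hf hff v.1).2 v.2,
      (not_injective_cycKey_iff _).2 ?_⟩ : {w : Fin (2 * 2 ^ a) → ℕ // Rearr f w ∧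
      ¬ Function.Injective (cycKey (Equiv.addRight (1 : Fin (2 * 2 ^ a))) w)})) ⟨?_, ?_⟩
  · intro t
    refine congrArg v.1 (Fin.ext ?_)
    rw [residue_val, residue_val, pow_addRight_val, Nat.mod_mul_left_mod, Nat.add_mod_right]
  · rintro ⟨v, hv⟩ ⟨u, hu⟩ h
    simp only [Subtype.mk.injEq] at h ⊢
    funext i
    simpa using congrFun h ((residue _).symm (i, 0))
  · rintro ⟨w, hw, hper⟩
    rw [not_injective_cycKey_iff] at hper
    have hwv : (fun t => w ⟨((residue (2 ^ a) t).1 : ℕ), by omega⟩) = w := by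
      funext t
      by_cases ht : (t : ℕ) < 2 ^ a
      · congr 1
        apply Fin.ext
        simp only [residue_val, Nat.mod_eq_of_lt ht]
      · rw [← hper]
        congr 1
        apply Fin.ext
        have h1 : (t : ℕ) % 2 ^ a = t - 2 ^ a := by
          rw [Nat.mod_eq_sub_mod (by omega), Nat.mod_eq_of_lt (by omega)]
        rw [pow_addRight_val]
        simp only [residue_val, h1]
        rw [Nat.mod_eq_of_lt (by omega)]
        omega
    refine ⟨⟨fun i => w ⟨i, by omega⟩, ?_⟩, Subtype.ext hwv⟩
    rw [← rearr_residue_iff hf hff]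
    rwa [hwv]

/-! ### From descent sets contained in `J` to descent sets equal to `J` -/

/-- Each rearrangement of the block colouring for `2L` either has distinct rotations or is
periodic. -/
lemma alpha_relation (a : ℕ) (L : Finset ℕ) :
    (2 * 2 ^ a) * alphaC (2 * 2 ^ a) (L.image (2 * ·)) + alphaP (2 ^ a) L =
      alphaP (2 * 2 ^ a) (L.image (2 * ·)) := by
  have hm : 0 < 2 ^ a := by positivity
  set J := L.image (2 * ·) with hJ
  have hf := blockIdx_monotone (n := 2 * 2 ^ a) J
  have hf' := blockIdx_monotone (n := 2 ^ a) L
  unfold alphaC alphaP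
  simp only [descSet_subset_iff]
  rw [← card_conj (by omega) isFullCycle_addRight, card_primitive hf isFullCycle_addRight,
    card_blockInc hf, card_blockInc hf', ← card_periodic hf (blockIdx_double _ L)]
  have hfin : Finite {w : Fin (2 * 2 ^ a) → ℕ // Rearr (blockIdx (2 * 2 ^ a) J) w} := by
    refine Set.Finite.subset (Set.finite_range
      fun σ : Equiv.Perm (Fin (2 * 2 ^ a)) => blockIdx (2 * 2 ^ a) J ∘ σ) ?_
    rintro w ⟨σ, rfl⟩
    exact ⟨σ, rfl⟩
  set Q := fun w => Function.Injective (cycKey (Equiv.addRight (1 : Fin (2 * 2 ^ a))) w)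
  classical
  have := Nat.card_congr (Equiv.sumCompl
    fun w : {w : Fin (2 * 2 ^ a) → ℕ // Rearr (blockIdx (2 * 2 ^ a) J) w} => Q w.1)
  rw [Nat.card_sum] at this
  rw [← this]
  congr 1
  · exact (Nat.card_congr (Equiv.subtypeSubtypeEquivSubtypeInter _ Q)).symm
  · exact (Nat.card_congr (Equiv.subtypeSubtypeEquivSubtypeInter _ fun w => ¬ Q w)).symm

lemma card_subset_eq_sum {n : ℕ} (P : Equiv.Perm (Fin n) → Prop) (K : Finset ℕ) :
    Nat.card {π : Equiv.Perm (Fin n) // P π ∧ descSet π ⊆ K} =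
      ∑ J ∈ K.powerset, Nat.card {π : Equiv.Perm (Fin n) // P π ∧ descSet π = J} := by
  classical
  simp only [Nat.card_eq_fintype_card, Fintype.card_subtype]
  rw [Finset.card_eq_sum_card_fiberwise (f := descSet) (t := K.powerset)]
  · refine Finset.sum_congr rfl fun J hJ => ?_
    rw [Finset.filter_filter]
    congr 1
    ext π
    simp only [Finset.mem_filter, Finset.mem_univ, true_and]
    rw [Finset.mem_powerset] at hJ
    constructor
    · rintro ⟨⟨h1, _⟩, h2⟩; exact ⟨h1, h2⟩
    · rintro ⟨h1, rfl⟩; exact ⟨⟨h1, hJ⟩, rfl⟩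
  · intro π hπ
    simp at hπ ⊢
    exact hπ.2

lemma alphaC_eq_sum (n : ℕ) (K : Finset ℕ) : alphaC n K = ∑ J ∈ K.powerset, betaC n J :=
  card_subset_eq_sum _ K

lemma alphaP_eq_sum (n : ℕ) (K : Finset ℕ) : alphaP n K = ∑ J ∈ K.powerset, betaP n J := by
  simpa [alphaP, betaP] using card_subset_eq_sum (n := n) (fun _ => True) K

lemma sum_powerset_double (F : Finset ℕ → ℕ) (L : Finset ℕ) :
    ∑ J ∈ (L.image (2 * ·)).powerset, F J = ∑ M ∈ L.powerset, F (M.image (2 * ·)) := by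
  rw [Finset.powerset_image, Finset.sum_image]
  intro A _ B _ h
  exact Finset.image_injective (mul_right_injective₀ two_ne_zero) h

/-- Summing over subsets of `L` gives `alpha_relation`; by induction all terms but the one for `L`
itself cancel. -/
lemma beta_relation (a : ℕ) (L : Finset ℕ) :
    (2 * 2 ^ a) * betaC (2 * 2 ^ a) (L.image (2 * ·)) + betaP (2 ^ a) L =
      betaP (2 * 2 ^ a) (L.image (2 * ·)) := by
  induction L using Finset.strongInduction with
  | H L ih =>
    have h := alpha_relation a L
    rw [alphaC_eq_sum, alphaP_eq_sum, alphaP_eq_sum, sum_powerset_double, sum_powerset_double,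
      Finset.mul_sum, ← Finset.sum_add_distrib,
      ← Finset.sum_erase_add _ _ (Finset.mem_powerset_self L),
      ← Finset.sum_erase_add _ _ (Finset.mem_powerset_self L)] at h
    have h2 : ∀ M ∈ L.powerset.erase L,
        (2 * 2 ^ a) * betaC (2 * 2 ^ a) (M.image (2 * ·)) + betaP (2 ^ a) M =
          betaP (2 * 2 ^ a) (M.image (2 * ·)) := by
      intro M hM
      rw [Finset.mem_erase, Finset.mem_powerset] at hM
      exact ih M (lt_of_le_of_ne hM.2 hM.1)
    rw [Finset.sum_congr rfl h2] at h
    exact Nat.add_left_cancel h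

lemma betaP_full (m : ℕ) : betaP m (Finset.Ioo 0 m) = 1 := by
  have key : ∀ π : Equiv.Perm (Fin m), descSet π = Finset.Ioo 0 m ↔ π = Fin.revPerm := by
    intro π
    constructor
    · intro h
      -- The composite with the reversal has no descents, so it is increasing.
      have h1 : BlockInc (blockIdx m ∅) (π.trans Fin.revPerm) := by
        rw [← descSet_subset_iff]
        intro p hp
        obtain ⟨h0, hpm, hlt⟩ := mem_descSet.1 hp
        have : p ∈ descSet π := by rw [h]; simp [h0, hpm]
        obtain ⟨_, _, hlt'⟩ := mem_descSet.1 this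
        simp only [Equiv.trans_apply, Fin.revPerm_apply, Fin.rev_lt_rev] at hlt
        exact absurd hlt' (lt_asymm hlt)
      have h2 : Monotone (π.trans Fin.revPerm) := by
        refine StrictMono.monotone fun i j hij => h1 i j hij ?_
        simp [blockIdx]
      have h3 := (Equiv.Perm.monotone_iff _).1 h2
      ext i
      have := congrArg Fin.rev (DFunLike.congr_fun h3 i)
      simp at this
      simp [this]
    · rintro rfl
      ext p
      rw [mem_descSet, Finset.mem_Ioo]
      constructor
      · rintro ⟨h0, h, _⟩; exact ⟨h0, h⟩
      · rintro ⟨h0, h⟩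
        refine ⟨h0, h, ?_⟩
        simp only [Fin.revPerm_apply, Fin.rev_lt_rev, Fin.mk_lt_mk]
        omega
  unfold betaP
  simp only [key]
  simp

/-- If `n ≥ 2` is a power of `2`, then the number of alternating (up–down)
`n`-cycles equals `(E_n - 1)/n`, where `E_n` is the number of alternating
permutations of `[n]`. -/
theorem betaC_alternating_pow_two (n : ℕ) (h : ∃ a : ℕ, 1 ≤ a ∧ n = 2 ^ a) :
    (betaC n ((Finset.Ioo 0 n).filter fun i => Even i) : ℚ) =
      ((betaP n ((Finset.Ioo 0 n).filter fun i => Even i) : ℚ) - 1) / n := by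
  obtain ⟨b, hb, rfl⟩ := h
  obtain ⟨a, rfl⟩ : ∃ a, b = a + 1 := ⟨b - 1, by omega⟩
  rw [pow_succ']
  have hset : ((Finset.Ioo 0 (2 * 2 ^ a)).filter fun i => Even i) =
      (Finset.Ioo 0 (2 ^ a)).image (2 * ·) := by
    ext i
    simp only [Finset.mem_filter, Finset.mem_Ioo, Finset.mem_image, even_iff_exists_two_mul]
    constructor
    · rintro ⟨⟨h0, h1⟩, q, rfl⟩
      exact ⟨q, ⟨by omega, by omega⟩, rfl⟩
    · rintro ⟨q, ⟨h0, h1⟩, rfl⟩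
      exact ⟨⟨by omega, by omega⟩, q, rfl⟩
  rw [hset]
  have hrel := beta_relation a (Finset.Ioo 0 (2 ^ a))
  rw [betaP_full] at hrel
  rw [← hrel]
  push_cast
  field_simp
  ring
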